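/- For a nonunital channel E implemented repeatably with constant input I/d (the maximally mixed state), the number of repetitions n satisfies n ≤ log(dim H_M)/Δ, where Δ = S(I/d) − S(E(I/d)) > 0; hence any nonunital channel is at most ⌊log(dim H_M)/Δ⌋-repeatable with memory H_M. -/

import Mathlib

open Matrix Kronecker BigOperators
open scoped ComplexOrder

noncomputable def vnEntropy {n : Type*} [Fintype n] [DecidableEq n] (ρ : Matrix n n ℂ) : ℝ :=
  if h : ρ.IsHermitian then ∑ i, Real.negMulLog (h.eigenvalues i) else 0

def IsDensity {n : Type*} [Fintype n] [DecidableEq n] (ρ : Matrix n n ℂ) : Prop :=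
  ρ.PosSemidef ∧ ρ.trace = 1

def IsUnitary {n : Type*} [Fintype n] [DecidableEq n] (U : Matrix n n ℂ) : Prop :=
  U * Uᴴ = 1 ∧ Uᴴ * U = 1

noncomputable def ptraceMem {μ s : Type*} [Fintype μ] (X : Matrix (μ × s) (μ × s) ℂ) : Matrix s s ℂ :=
  Matrix.of fun i j => ∑ a, X (a, i) (a, j)

noncomputable def ptraceSys {μ s : Type*} [Fintype s] (X : Matrix (μ × s) (μ × s) ℂ) : Matrix μ μ ℂ :=
  Matrix.of fun a b => ∑ i, X (a, i) (b, i)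

noncomputable def inducedChan {μ s : Type*} [Fintype μ] [Fintype s]
    (U : Matrix (μ × s) (μ × s) ℂ) (ξ : Matrix μ μ ℂ) (ρ : Matrix s s ℂ) : Matrix s s ℂ :=
  ptraceMem (U * (ξ ⊗ₖ ρ) * Uᴴ)

noncomputable def memUpdate {μ s : Type*} [Fintype μ] [Fintype s]
    (U : Matrix (μ × s) (μ × s) ℂ) (ξ : Matrix μ μ ℂ) (ρ : Matrix s s ℂ) : Matrix μ μ ℂ :=
  ptraceSys (U * (ξ ⊗ₖ ρ) * Uᴴ)

def ctrlU {μ s : Type*} [DecidableEq μ] (Uf : μ → Matrix s s ℂ) : Matrix (μ × s) (μ × s) ℂ :=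
  Matrix.of fun p q => if p.1 = q.1 then Uf p.1 p.2 q.2 else 0

def extendMap {n m : Type*} [Fintype n] [DecidableEq n]
    (E : Matrix n n ℂ →ₗ[ℂ] Matrix n n ℂ) (ρ : Matrix (n × m) (n × m) ℂ) :
    Matrix (n × m) (n × m) ℂ :=
  Matrix.of fun p q => E (Matrix.of fun i j => ρ (i, p.2) (j, q.2)) p.1 q.1

def IsCP {n : Type*} [Fintype n] [DecidableEq n]
    (E : Matrix n n ℂ →ₗ[ℂ] Matrix n n ℂ) : Prop :=
  ∀ (k : ℕ) (ρ : Matrix (n × Fin k) (n × Fin k) ℂ), ρ.PosSemidef → (extendMap E ρ).PosSemidef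

def IsTP {n : Type*} [Fintype n] [DecidableEq n]
    (E : Matrix n n ℂ →ₗ[ℂ] Matrix n n ℂ) : Prop :=
  ∀ ρ, (E ρ).trace = ρ.trace

noncomputable def mlog {n : Type*} [Fintype n] [DecidableEq n] (ρ : Matrix n n ℂ) :
    Matrix n n ℂ :=
  if h : ρ.IsHermitian then
    (h.eigenvectorUnitary : Matrix n n ℂ) *
      Matrix.diagonal (fun i => (Real.log (h.eigenvalues i) : ℂ)) *
      (h.eigenvectorUnitary : Matrix n n ℂ)ᴴ
  else 0

noncomputable def relEntropy {n : Type*} [Fintype n] [DecidableEq n]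
    (ρ ω : Matrix n n ℂ) : ℝ :=
  ((ρ * (mlog ρ - mlog ω)).trace).re

theorem aux_vn_diag {n : Type*} [Fintype n] [DecidableEq n] (V : Matrix n n ℂ)
    (hV : IsUnitary V) (d : n → ℝ) :
    vnEntropy (V * diagonal (fun i => (d i : ℂ)) * Vᴴ) = ∑ i, Real.negMulLog (d i) := by
  have hH : (V * diagonal (fun i => (d i : ℂ)) * Vᴴ).IsHermitian := by
    apply isHermitian_mul_mul_conjTranspose
    rw [IsHermitian, diagonal_conjTranspose]
    congr 1
    ext i
    simp
  have h1 := hH.roots_charpoly_eq_eigenvalues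
  have h2 : (V * diagonal (fun i => (d i : ℂ)) * Vᴴ).charpoly.roots
      = Multiset.map (fun i => (d i : ℂ)) Finset.univ.val := by
    rw [charpoly_mul_comm, ← mul_assoc, hV.2, one_mul, charpoly_diagonal, Polynomial.roots_prod]
    · simp
    · simp [Finset.prod_ne_zero_iff, Polynomial.X_sub_C_ne_zero]
  rw [h2] at h1
  have h3 := congrArg (fun m => (Multiset.map (fun z : ℂ => Real.negMulLog z.re) m).sum) h1
  simp only [Multiset.map_map] at h3
  rw [vnEntropy, dif_pos hH]
  exact h3.symm

theorem aux_decomp {n : Type*} [Fintype n] [DecidableEq n] (ρ : Matrix n n ℂ)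
    (h : IsDensity ρ) : ∃ (V : Matrix n n ℂ) (d : n → ℝ), IsUnitary V ∧ (∀ i, 0 ≤ d i) ∧
      ∑ i, d i = 1 ∧ ρ = V * diagonal (fun i => (d i : ℂ)) * Vᴴ ∧
      vnEntropy ρ = ∑ i, Real.negMulLog (d i) := by
  have hU : IsUnitary (h.1.1.eigenvectorUnitary : Matrix n n ℂ) :=
    ⟨Unitary.coe_mul_star_self _, Unitary.coe_star_mul_self _⟩
  refine ⟨h.1.1.eigenvectorUnitary, h.1.1.eigenvalues, hU, h.1.eigenvalues_nonneg, ?_, ?_, ?_⟩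
  · have := h.1.1.trace_eq_sum_eigenvalues.symm.trans h.2
    have h2 := congrArg Complex.re this
    rw [Complex.re_sum] at h2
    exact h2
  · conv_lhs => rw [h.1.1.spectral_theorem, Unitary.conjStarAlgAut_apply]
    rfl
  · rw [vnEntropy, dif_pos h.1.1]

theorem aux_density_conj {n : Type*} [Fintype n] [DecidableEq n] (ρ V : Matrix n n ℂ)
    (h : IsDensity ρ) (hV : IsUnitary V) : IsDensity (V * ρ * Vᴴ) := by
  refine ⟨h.1.mul_mul_conjTranspose_same V, ?_⟩
  rw [trace_mul_comm, ← mul_assoc, hV.2, one_mul, h.2]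

theorem aux_unitary_mul {n : Type*} [Fintype n] [DecidableEq n] (V W : Matrix n n ℂ)
    (hV : IsUnitary V) (hW : IsUnitary W) : IsUnitary (V * W) := by
  constructor
  · rw [conjTranspose_mul, mul_assoc, ← mul_assoc W, hW.1, one_mul, hV.1]
  · rw [conjTranspose_mul, mul_assoc, ← mul_assoc _ V, hV.2, one_mul, hW.2]

theorem aux_unitary_ct {n : Type*} [Fintype n] [DecidableEq n] (V : Matrix n n ℂ)
    (hV : IsUnitary V) : IsUnitary Vᴴ := by
  constructor
  · rw [conjTranspose_conjTranspose, hV.2]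
  · rw [conjTranspose_conjTranspose, hV.1]

theorem aux_unitary_kron {m n : Type*} [Fintype n] [DecidableEq n] [Fintype m] [DecidableEq m]
    (V : Matrix m m ℂ) (W : Matrix n n ℂ)
    (hV : IsUnitary V) (hW : IsUnitary W) : IsUnitary (V ⊗ₖ W) := by
  constructor
  · rw [conjTranspose_kronecker, ← mul_kronecker_mul, hV.1, hW.1, one_kronecker_one]
  · rw [conjTranspose_kronecker, ← mul_kronecker_mul, hV.2, hW.2, one_kronecker_one]

theorem aux_vn_conj {n : Type*} [Fintype n] [DecidableEq n] (ρ V : Matrix n n ℂ)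
    (h : IsDensity ρ) (hV : IsUnitary V) : vnEntropy (V * ρ * Vᴴ) = vnEntropy ρ := by
  obtain ⟨W, d, hW, -, -, h1, h2⟩ := aux_decomp ρ h
  rw [h2, ← aux_vn_diag (V * W) (aux_unitary_mul V W hV hW), h1]
  simp only [conjTranspose_mul, mul_assoc]

theorem aux_row {n : Type*} [Fintype n] [DecidableEq n] (T : Matrix n n ℂ)
    (hT : IsUnitary T) (i : n) : ∑ k, Complex.normSq (T i k) = 1 := by
  have := congrFun (congrFun hT.1 i) i
  simp only [mul_apply, conjTranspose_apply, one_apply_eq] at this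
  have h2 : ∀ k, T i k * star (T i k) = (Complex.normSq (T i k) : ℂ) := fun k =>
    Complex.mul_conj _
  simp only [h2] at this
  exact_mod_cast this

theorem aux_col {n : Type*} [Fintype n] [DecidableEq n] (T : Matrix n n ℂ)
    (hT : IsUnitary T) (k : n) : ∑ i, Complex.normSq (T i k) = 1 := by
  have := aux_row Tᴴ (aux_unitary_ct T hT) k
  simpa [conjTranspose_apply] using this

theorem aux_schur {n : Type*} [Fintype n] [DecidableEq n] (ρ : Matrix n n ℂ)
    (h : IsDensity ρ) : vnEntropy ρ ≤ ∑ i, Real.negMulLog (ρ i i).re := by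
  obtain ⟨T, d, hT, hd, -, h1, h2⟩ := aux_decomp ρ h
  have h3 : ∀ i, (ρ i i).re = ∑ k, Complex.normSq (T i k) • d k := by
    intro i
    have : ρ i i = ∑ k, ((Complex.normSq (T i k) * d k : ℝ) : ℂ) := by
      rw [h1, mul_apply]
      refine Finset.sum_congr rfl fun k _ => ?_
      rw [mul_diagonal, conjTranspose_apply, Complex.ofReal_mul, ← Complex.mul_conj]
      simp only [RCLike.star_def]
      ring
    rw [this, ← Complex.ofReal_sum, Complex.ofReal_re]
    rfl
  have h4 : ∀ i, ∑ k, Complex.normSq (T i k) • Real.negMulLog (d k)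
      ≤ Real.negMulLog (ρ i i).re := by
    intro i
    rw [h3]
    exact Real.concaveOn_negMulLog.le_map_sum (fun k _ => Complex.normSq_nonneg _)
      (aux_row T hT i) (fun k _ => hd k)
  calc vnEntropy ρ = ∑ k, ∑ i, Complex.normSq (T i k) • Real.negMulLog (d k) := by
        rw [h2]
        refine Finset.sum_congr rfl fun k _ => ?_
        rw [← Finset.sum_smul, aux_col T hT, one_smul]
    _ = ∑ i, ∑ k, Complex.normSq (T i k) • Real.negMulLog (d k) := Finset.sum_comm
    _ ≤ _ := Finset.sum_le_sum fun i _ => h4 i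

theorem aux_classical {m n : Type*} [Fintype n] [Fintype m] (P : m × n → ℝ) (p : m → ℝ)
    (q : n → ℝ) (hP : ∀ x, 0 ≤ P x) (hp : ∀ a, ∑ i, P (a, i) = p a)
    (hq : ∀ i, ∑ a, P (a, i) = q i) (hp1 : ∑ a, p a = 1) (hq1 : ∑ i, q i = 1) :
    ∑ x, Real.negMulLog (P x) ≤ ∑ a, Real.negMulLog (p a) + ∑ i, Real.negMulLog (q i) := by
  have hpn : ∀ a, 0 ≤ p a := fun a => hp a ▸ Finset.sum_nonneg fun i _ => hP _
  have hqn : ∀ a, 0 ≤ q a := fun a => hq a ▸ Finset.sum_nonneg fun i _ => hP _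
  have key : ∀ a i, Real.negMulLog (P (a, i)) ≤
      p a * q i - P (a, i) - P (a, i) * Real.log (p a) - P (a, i) * Real.log (q i) := by
    intro a i
    rcases (hP (a, i)).eq_or_lt with h0 | h0
    · rw [← h0]
      simp [mul_nonneg (hpn a) (hqn i)]
    · have hpa : 0 < p a := lt_of_lt_of_le h0 (hp a ▸
        Finset.single_le_sum (f := fun i => P (a, i)) (fun i _ => hP _) (Finset.mem_univ i))
      have hqi : 0 < q i := lt_of_lt_of_le h0 (hq i ▸
        Finset.single_le_sum (f := fun a => P (a, i)) (fun i _ => hP _) (Finset.mem_univ a))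
      have h1 := Real.log_le_sub_one_of_pos (div_pos (mul_pos hpa hqi) h0)
      rw [Real.log_div (mul_pos hpa hqi).ne' h0.ne', Real.log_mul hpa.ne' hqi.ne'] at h1
      have h2 := mul_le_mul_of_nonneg_left h1 h0.le
      have h3 : P (a, i) * (p a * q i / P (a, i) - 1) = p a * q i - P (a, i) := by
        field_simp
      rw [h3] at h2
      unfold Real.negMulLog
      linarith
  have hPsum : ∑ a, ∑ i, P (a, i) = 1 := by simp only [hp, hp1]
  rw [Fintype.sum_prod_type]
  calc _ ≤ ∑ a, ∑ i, (p a * q i - P (a, i) - P (a, i) * Real.log (p a)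
            - P (a, i) * Real.log (q i)) :=
        Finset.sum_le_sum fun a _ => Finset.sum_le_sum fun i _ => key a i
    _ = _ := by
      simp only [Finset.sum_sub_distrib]
      rw [hPsum]
      have e1 : ∑ a, ∑ i, p a * q i = 1 := by
        simp only [← Finset.mul_sum, hq1, mul_one, hp1]
      have e2 : ∑ a, ∑ i, P (a, i) * Real.log (p a) = - ∑ a, Real.negMulLog (p a) := by
        simp only [← Finset.sum_mul, hp, Real.negMulLog, ← Finset.sum_neg_distrib]
        simp
      have e3 : ∑ a, ∑ i, P (a, i) * Real.log (q i) = - ∑ a, Real.negMulLog (q a) := by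
        rw [Finset.sum_comm]
        simp only [← Finset.sum_mul, hq, Real.negMulLog, ← Finset.sum_neg_distrib]
        simp
      rw [e1, e2, e3]
      ring

theorem aux_density_sys {m n : Type*} [Fintype n] [DecidableEq n] [Fintype m] [DecidableEq m]
    (ρ : Matrix (m × n) (m × n) ℂ) (h : IsDensity ρ) : IsDensity (ptraceSys ρ) := by
  constructor
  · have : ptraceSys ρ = ∑ i, ρ.submatrix (fun a => (a, i)) (fun a => (a, i)) := by
      ext a b
      simp [ptraceSys, Matrix.sum_apply]
    rw [this]
    exact posSemidef_sum _ fun i _ => h.1.submatrix _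
  · rw [← h.2]
    simp [trace, ptraceSys, Fintype.sum_prod_type]

theorem aux_density_mem {m n : Type*} [Fintype n] [DecidableEq n] [Fintype m] [DecidableEq m]
    (ρ : Matrix (m × n) (m × n) ℂ) (h : IsDensity ρ) : IsDensity (ptraceMem ρ) := by
  constructor
  · have : ptraceMem ρ = ∑ i, ρ.submatrix (fun a => (i, a)) (fun a => (i, a)) := by
      ext a b
      simp [ptraceMem, Matrix.sum_apply]
    rw [this]
    exact posSemidef_sum _ fun i _ => h.1.submatrix _
  · rw [← h.2]
    simp [trace, ptraceMem, Fintype.sum_prod_type_right]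

theorem aux_ptraceSys_conj {m n : Type*} [Fintype n] [DecidableEq n] [Fintype m] [DecidableEq m]
    (ρ : Matrix (m × n) (m × n) ℂ) (A : Matrix m m ℂ) (B : Matrix n n ℂ) (hB : IsUnitary B) :
    ptraceSys ((A ⊗ₖ B) * ρ * (A ⊗ₖ B)ᴴ) = A * ptraceSys ρ * Aᴴ := by
  have hB2 : ∀ j k, ∑ i, B i j * star (B i k) = if k = j then 1 else 0 := by
    intro j k
    have := congrFun (congrFun hB.2 k) j
    simp only [mul_apply, conjTranspose_apply, one_apply] at this
    rw [← this]
    exact Finset.sum_congr rfl fun i _ => mul_comm _ _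
  ext a b
  have : ptraceSys ((A ⊗ₖ B) * ρ * (A ⊗ₖ B)ᴴ) a b =
      ∑ y, ∑ x, (A a x.1 * ρ x y * star (A b y.1)) * ∑ i, B i x.2 * star (B i y.2) := by
    simp only [ptraceSys, of_apply, mul_apply, conjTranspose_apply, kroneckerMap_apply, star_mul',
      Finset.sum_mul, Finset.mul_sum]
    rw [Finset.sum_comm]
    refine Finset.sum_congr rfl fun y _ => ?_
    rw [Finset.sum_comm]
    refine Finset.sum_congr rfl fun x _ => Finset.sum_congr rfl fun i _ => ?_
    ring
  rw [this]
  simp only [hB2, mul_apply, ptraceSys, of_apply, conjTranspose_apply, Fintype.sum_prod_type,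
    mul_ite, mul_one, mul_zero, Finset.sum_ite_eq, Finset.mem_univ, if_true, Finset.sum_mul,
    Finset.mul_sum]
  refine Finset.sum_congr rfl fun y _ => ?_
  rw [Finset.sum_comm]

theorem aux_ptraceMem_swap {m n : Type*} [Fintype n] [Fintype m]
    (ρ : Matrix (m × n) (m × n) ℂ) :
    ptraceMem ρ = ptraceSys (ρ.submatrix (Equiv.prodComm n m) (Equiv.prodComm n m)) := by
  ext a b
  simp [ptraceMem, ptraceSys]

theorem aux_ptraceMem_conj {m n : Type*} [Fintype n] [DecidableEq n] [Fintype m] [DecidableEq m]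
    (ρ : Matrix (m × n) (m × n) ℂ) (A : Matrix m m ℂ) (B : Matrix n n ℂ) (hA : IsUnitary A) :
    ptraceMem ((A ⊗ₖ B) * ρ * (A ⊗ₖ B)ᴴ) = B * ptraceMem ρ * Bᴴ := by
  have e : (A ⊗ₖ B).submatrix (Equiv.prodComm n m) (Equiv.prodComm n m) = B ⊗ₖ A := by
    ext x y
    simp [mul_comm]
  rw [aux_ptraceMem_swap, aux_ptraceMem_swap, ← aux_ptraceSys_conj _ B A hA, ← e,
    conjTranspose_submatrix, submatrix_mul_equiv, submatrix_mul_equiv]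

theorem aux_subadd {m n : Type*} [Fintype n] [DecidableEq n] [Fintype m] [DecidableEq m]
    (ρ : Matrix (m × n) (m × n) ℂ) (h : IsDensity ρ) :
    vnEntropy ρ ≤ vnEntropy (ptraceSys ρ) + vnEntropy (ptraceMem ρ) := by
  obtain ⟨V, p, hV, hp, hp1, hVe, hVs⟩ := aux_decomp _ (aux_density_sys ρ h)
  obtain ⟨W, q, hW, hq, hq1, hWe, hWs⟩ := aux_decomp _ (aux_density_mem ρ h)
  have hK := aux_unitary_kron _ _ (aux_unitary_ct V hV) (aux_unitary_ct W hW)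
  have hD := aux_density_conj ρ _ h hK
  have e1 := aux_ptraceSys_conj ρ Vᴴ Wᴴ (aux_unitary_ct W hW)
  have e2 := aux_ptraceMem_conj ρ Vᴴ Wᴴ (aux_unitary_ct V hV)
  rw [← aux_vn_conj ρ _ h hK, hVs, hWs]
  refine (aux_schur _ hD).trans ?_
  generalize (Vᴴ ⊗ₖ Wᴴ) * ρ * (Vᴴ ⊗ₖ Wᴴ)ᴴ = σ at *
  have e1' : ptraceSys σ = diagonal (fun i => (p i : ℂ)) := by
    rw [e1, hVe, conjTranspose_conjTranspose, mul_assoc, mul_assoc, mul_assoc, hV.2, mul_one,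
      ← mul_assoc, hV.2, one_mul]
  have e2' : ptraceMem σ = diagonal (fun i => (q i : ℂ)) := by
    rw [e2, hWe, conjTranspose_conjTranspose, mul_assoc, mul_assoc, mul_assoc, hW.2, mul_one,
      ← mul_assoc, hW.2, one_mul]
  refine aux_classical (fun x => (σ x x).re) p q ?_ ?_ ?_ hp1 hq1
  · intro x
    exact (Complex.le_def.1 (hD.1.diag_nonneg (i := x))).1
  · intro a
    have := congrArg Complex.re (congrFun (congrFun e1' a) a)
    simpa [ptraceSys] using this
  · intro a
    have := congrArg Complex.re (congrFun (congrFun e2' a) a)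
    simpa [ptraceMem] using this

theorem aux_vn_nonneg {n : Type*} [Fintype n] [DecidableEq n] (ρ : Matrix n n ℂ)
    (h : IsDensity ρ) : 0 ≤ vnEntropy ρ := by
  obtain ⟨V, d, hV, hd, hd1, -, hs⟩ := aux_decomp ρ h
  rw [hs]
  refine Finset.sum_nonneg fun i _ => Real.negMulLog_nonneg (hd i) ?_
  rw [← hd1]
  exact Finset.single_le_sum (fun i _ => hd i) (Finset.mem_univ i)

theorem aux_max {n : Type*} [Fintype n] [Nonempty n] (d : n → ℝ) (hd : ∀ i, 0 ≤ d i)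
    (hd1 : ∑ i, d i = 1) : ∑ i, Real.negMulLog (d i) ≤ Real.log (Fintype.card n) ∧
      (∑ i, Real.negMulLog (d i) = Real.log (Fintype.card n) →
        ∀ i, d i = (Fintype.card n : ℝ)⁻¹) := by
  have hc : (0 : ℝ) < Fintype.card n := by exact_mod_cast Fintype.card_pos
  have hw1 : ∑ _i : n, (Fintype.card n : ℝ)⁻¹ = 1 := by simp
  have hR : Real.negMulLog (∑ i, (Fintype.card n : ℝ)⁻¹ • d i)
      = (Fintype.card n : ℝ)⁻¹ * Real.log (Fintype.card n) := by
    rw [← Finset.smul_sum, hd1, smul_eq_mul, mul_one, Real.negMulLog, Real.log_inv]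
    ring
  have hL : ∑ i, (Fintype.card n : ℝ)⁻¹ • Real.negMulLog (d i)
      = (Fintype.card n : ℝ)⁻¹ * ∑ i, Real.negMulLog (d i) := by
    rw [← Finset.smul_sum, smul_eq_mul]
  constructor
  · have := Real.concaveOn_negMulLog.le_map_sum (t := Finset.univ)
      (w := fun _ : n => (Fintype.card n : ℝ)⁻¹) (p := d)
      (fun _ _ => (inv_pos.2 hc).le) hw1 (fun i _ => hd i)
    rw [hR, hL] at this
    exact le_of_mul_le_mul_left this (inv_pos.2 hc)
  · intro he i
    have := (Real.strictConcaveOn_negMulLog.map_sum_eq_iff (t := Finset.univ)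
      (w := fun _ : n => (Fintype.card n : ℝ)⁻¹) (p := d)
      (fun _ _ => (inv_pos.2 hc)) hw1 (fun i _ => hd i)).1 (by rw [hR, hL, he]) i
        (Finset.mem_univ i)
    rw [this, ← Finset.smul_sum, hd1, smul_eq_mul, mul_one]

theorem aux_vn_le {n : Type*} [Fintype n] [DecidableEq n] [Nonempty n] (ρ : Matrix n n ℂ)
    (h : IsDensity ρ) : vnEntropy ρ ≤ Real.log (Fintype.card n) := by
  obtain ⟨V, d, hV, hd, hd1, -, hs⟩ := aux_decomp ρ h
  rw [hs]
  exact (aux_max d hd hd1).1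

theorem aux_vn_lt {n : Type*} [Fintype n] [DecidableEq n] [Nonempty n] (ρ : Matrix n n ℂ)
    (h : IsDensity ρ) (hne : ρ ≠ (Fintype.card n : ℂ)⁻¹ • (1 : Matrix n n ℂ)) :
    vnEntropy ρ < Real.log (Fintype.card n) := by
  refine lt_of_le_of_ne (aux_vn_le ρ h) fun he => hne ?_
  obtain ⟨V, d, hV, hd, hd1, hρ, hs⟩ := aux_decomp ρ h
  rw [hs] at he
  have := (aux_max d hd hd1).2 he
  have e : diagonal (fun i => (d i : ℂ)) = (Fintype.card n : ℂ)⁻¹ • (1 : Matrix n n ℂ) := by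
    rw [smul_one_eq_diagonal]
    congr 1
    ext i
    rw [this i]
    push_cast
    rfl
  rw [hρ, e, mul_smul_comm, mul_one, smul_mul_assoc, hV.1]

theorem aux_density_mixed {n : Type*} [Fintype n] [DecidableEq n] [Nonempty n] :
    IsDensity ((Fintype.card n : ℂ)⁻¹ • (1 : Matrix n n ℂ)) := by
  constructor
  · apply PosSemidef.smul PosSemidef.one
    rw [inv_nonneg]
    exact Nat.cast_nonneg _
  · rw [trace_smul, trace_one, smul_eq_mul, inv_mul_cancel₀]
    exact_mod_cast Fintype.card_ne_zero

theorem aux_density_kron {m n : Type*} [Fintype n] [DecidableEq n] [Fintype m] [DecidableEq m]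
    (ξ : Matrix m m ℂ) (ρ : Matrix n n ℂ) (h : IsDensity ξ) (h' : IsDensity ρ) :
    IsDensity (ξ ⊗ₖ ρ) := by
  refine ⟨h.1.kronecker h'.1, ?_⟩
  rw [trace_kronecker, h.2, h'.2, one_mul]

theorem aux_vn_kron {m n : Type*} [Fintype n] [DecidableEq n] [Fintype m] [DecidableEq m]
    [Nonempty n] (ξ : Matrix m m ℂ) (h : IsDensity ξ) :
    vnEntropy (ξ ⊗ₖ ((Fintype.card n : ℂ)⁻¹ • (1 : Matrix n n ℂ)))
      = vnEntropy ξ + Real.log (Fintype.card n) := by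
  obtain ⟨V, d, hV, hd, hd1, hρ, hs⟩ := aux_decomp ξ h
  have hu1 : IsUnitary (1 : Matrix n n ℂ) := by simp [IsUnitary]
  have hc : (Fintype.card n : ℝ) ≠ 0 := by exact_mod_cast Fintype.card_ne_zero
  have e : ξ ⊗ₖ ((Fintype.card n : ℂ)⁻¹ • (1 : Matrix n n ℂ)) =
      (V ⊗ₖ (1 : Matrix n n ℂ)) *
        diagonal (fun x : m × n => ((d x.1 * (Fintype.card n : ℝ)⁻¹ : ℝ) : ℂ)) *
        (V ⊗ₖ (1 : Matrix n n ℂ))ᴴ := by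
    have : diagonal (fun x : m × n => ((d x.1 * (Fintype.card n : ℝ)⁻¹ : ℝ) : ℂ)) =
        diagonal (fun i => (d i : ℂ)) ⊗ₖ ((Fintype.card n : ℂ)⁻¹ • (1 : Matrix n n ℂ)) := by
      rw [smul_one_eq_diagonal, diagonal_kronecker_diagonal]
      congr 1
      ext x
      push_cast
      rfl
    rw [this, conjTranspose_kronecker, ← mul_kronecker_mul, ← mul_kronecker_mul, ← hρ]
    simp
  rw [e, aux_vn_diag _ (aux_unitary_kron V 1 hV hu1), hs, Fintype.sum_prod_type]
  simp only [Real.negMulLog_mul, Finset.sum_const, Finset.card_univ, nsmul_eq_mul, mul_add,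
    Finset.sum_add_distrib]
  congr 1
  · refine Finset.sum_congr rfl fun i _ => ?_
    field_simp
  · have : ∀ i, (Fintype.card n : ℝ) * (d i * Real.negMulLog (Fintype.card n : ℝ)⁻¹)
        = d i * Real.log (Fintype.card n) := by
      intro i
      rw [Real.negMulLog, Real.log_inv]
      field_simp
    simp only [this, ← Finset.sum_mul, hd1, one_mul]

theorem aux_density_chan {s : Type*} [Fintype s] [DecidableEq s]
    (E : Matrix s s ℂ →ₗ[ℂ] Matrix s s ℂ) (hCP : IsCP E) (hTP : IsTP E) (ρ : Matrix s s ℂ)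
    (h : IsDensity ρ) : IsDensity (E ρ) := by
  refine ⟨?_, (hTP ρ).trans h.2⟩
  have := hCP 1 (ρ.submatrix Prod.fst Prod.fst) (h.1.submatrix _)
  exact this.submatrix (fun i => (i, 0))

theorem nonunital_bounded_repeatability
    {μ s : Type*} [Fintype μ] [DecidableEq μ] [Fintype s] [DecidableEq s]
    [Nonempty μ] [Nonempty s]
    (E : Matrix s s ℂ →ₗ[ℂ] Matrix s s ℂ)
    (hCP : IsCP E) (hTP : IsTP E) (hnonunital : E 1 ≠ 1)
    (U : Matrix (μ × s) (μ × s) ℂ) (hU : IsUnitary U)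
    (ξseq : ℕ → Matrix μ μ ℂ) (hξ0 : IsDensity (ξseq 0))
    (hrec : ∀ k, ξseq (k + 1) =
      memUpdate U (ξseq k) ((Fintype.card s : ℂ)⁻¹ • (1 : Matrix s s ℂ)))
    (n : ℕ)
    (hrep : ∀ k < n, inducedChan U (ξseq k) ((Fintype.card s : ℂ)⁻¹ • (1 : Matrix s s ℂ)) =
      E ((Fintype.card s : ℂ)⁻¹ • (1 : Matrix s s ℂ)))
    (Δ : ℝ)
    (hΔ : Δ = Real.log (Fintype.card s) -
      vnEntropy (E ((Fintype.card s : ℂ)⁻¹ • (1 : Matrix s s ℂ)))) :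
    0 < Δ ∧ (n : ℝ) ≤ Real.log (Fintype.card μ) / Δ := by
  have hmix : IsDensity ((Fintype.card s : ℂ)⁻¹ • (1 : Matrix s s ℂ)) := aux_density_mixed
  have hdens : ∀ k, IsDensity (ξseq k) := by
    intro k
    induction k with
    | zero => exact hξ0
    | succ k ih =>
      rw [hrec]
      exact aux_density_sys _ (aux_density_conj _ U (aux_density_kron _ _ ih hmix) hU)
  have hpos : 0 < Δ := by
    rw [hΔ, sub_pos]
    refine aux_vn_lt _ (aux_density_chan E hCP hTP _ hmix) fun he => hnonunital ?_
    rw [map_smul] at he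
    have hc : (Fintype.card s : ℂ)⁻¹ ≠ 0 :=
      inv_ne_zero (by exact_mod_cast Fintype.card_ne_zero)
    exact smul_right_injective _ hc he
  refine ⟨hpos, ?_⟩
  have hstep : ∀ k < n, vnEntropy (ξseq k) + Δ ≤ vnEntropy (ξseq (k + 1)) := by
    intro k hk
    have hd := aux_density_kron _ _ (hdens k) hmix
    have h1 := aux_subadd _ (aux_density_conj _ U hd hU)
    rw [aux_vn_conj _ U hd hU, aux_vn_kron _ (hdens k)] at h1
    have h2 := hrep k hk
    rw [inducedChan] at h2
    rw [h2] at h1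
    rw [hrec k, memUpdate, hΔ]
    linarith
  have hind : ∀ k ≤ n, k * Δ ≤ vnEntropy (ξseq k) := by
    intro k
    induction k with
    | zero =>
      intro _
      simpa using aux_vn_nonneg _ hξ0
    | succ k ih =>
      intro hk
      have h1 := ih (by omega)
      have h2 := hstep k (by omega)
      push_cast
      linarith
  rw [le_div_iff₀ hpos]
  exact (hind n le_rfl).trans (aux_vn_le _ (hdens n))
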